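/- arXiv:2308.01289 — 2 statements merged into one kernel-verified Lean document; each statement's English description precedes it below -/
import Mathlib

section
/- For every integer j ≥ 0 and all reals r > 0, k > 0, one has (2k²)^j ∫_0^∞ p J₀(pr)/(p² + k²)^{j+1} dp = ((kr)^j / j!) K_j(kr). Consequently, for every integer n ≥ 1, the 2D inverse Fourier transform of ĝ_n satisfies h_n(r,k) = (1/(2π)) Σ_{j=0}^{n−1} ∫_0^∞ (2k²)^j/(p² + k²)^{j+1} J₀(pr) p dp = (1/(2π)) Σ_{j=0}^{n−1} ((kr)^j / j!) K_j(kr). -/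
/-- The Bessel function of the first kind of order zero,
`J₀(x) = (1/π) ∫_0^π cos(x sin θ) dθ`. -/
noncomputable def besselJ0 (x : ℝ) : ℝ :=
  (1 / Real.pi) * ∫ θ in (0 : ℝ)..Real.pi, Real.cos (x * Real.sin θ)

/-- The modified Bessel function of the second kind of integer order `j`,
`K_j(x) = ∫_0^∞ e^{-x cosh t} cosh(jt) dt`. -/
noncomputable def besselK (j : ℕ) (x : ℝ) : ℝ :=
  ∫ t in Set.Ioi (0 : ℝ), Real.exp (-(x * Real.cosh t)) * Real.cosh ((j : ℝ) * t)

/-!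
Write `j! / (p² + k²)^(j+1)` as the Laplace integral `∫₀^∞ s^j exp(-(p² + k²) s) ds` and exchange
the integrals. The inner one is Weber's integral
`∫₀^∞ p J₀(pr) exp(-s p²) dp = exp(-r² / (4s)) / (2s)`, the Fourier transform of a plane Gaussian
in polar coordinates. Putting `s = (r / 2k) e^t` turns the remaining exponent
`-k² s - r² / (4s)` into `-kr cosh t`, and the integral over `t ∈ ℝ` is `2 K_j(kr)`.

For `j = 0` the exchange is not justified by `|J₀| ≤ 1` alone: it needs the decay
`J₀(x) = O(x^(-1/2))`, obtained by integrating by parts away from the stationary point of the phase.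
-/

open MeasureTheory Set Filter Asymptotics

section Oscillation

-- A nonnegative increasing amplitude has total variation `u b - u a`, so after an integration by
-- parts the boundary terms and the remaining integral add up to at most `2 * M * u b`.
lemma abs_integral_mul_deriv_le_of_deriv_nonneg {u u' v v' : ℝ → ℝ} {a b M : ℝ} (hab : a ≤ b)
    (hu : ∀ t ∈ uIcc a b, HasDerivAt u (u' t) t) (hv : ∀ t ∈ uIcc a b, HasDerivAt v (v' t) t)
    (hu'int : IntervalIntegrable u' volume a b) (hv'int : IntervalIntegrable v' volume a b)
    (hua : 0 ≤ u a) (hu' : ∀ t ∈ uIcc a b, 0 ≤ u' t) (hvM : ∀ t ∈ uIcc a b, |v t| ≤ M) :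
    |∫ t in a..b, u t * v' t| ≤ 2 * M * u b := by
  have hvariation : ∫ t in a..b, u' t = u b - u a :=
    intervalIntegral.integral_eq_sub_of_hasDerivAt hu hu'int
  have hub : u a ≤ u b := by
    rw [← sub_nonneg, ← hvariation]
    exact intervalIntegral.integral_nonneg hab fun t ht => hu' t (Icc_subset_uIcc ht)
  have hrest : |∫ t in a..b, u' t * v t| ≤ M * (u b - u a) := by
    rw [← hvariation, ← intervalIntegral.integral_const_mul, ← Real.norm_eq_abs]
    refine intervalIntegral.norm_integral_le_of_norm_le hab (.of_forall fun t ht => ?_)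
      (hu'int.const_mul M)
    have ht : t ∈ uIcc a b := Icc_subset_uIcc (Ioc_subset_Icc_self ht)
    rw [Real.norm_eq_abs, abs_mul, abs_of_nonneg (hu' t ht), mul_comm]
    exact mul_le_mul_of_nonneg_right (hvM t ht) (hu' t ht)
  have hb : |u b * v b| ≤ u b * M := by
    rw [abs_mul, abs_of_nonneg (hua.trans hub)]
    exact mul_le_mul_of_nonneg_left (hvM b right_mem_uIcc) (hua.trans hub)
  have ha : |u a * v a| ≤ u a * M := by
    rw [abs_mul, abs_of_nonneg hua]
    exact mul_le_mul_of_nonneg_left (hvM a left_mem_uIcc) hua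
  rw [intervalIntegral.integral_mul_deriv_eq_deriv_mul hu hv hu'int hv'int]
  calc |u b * v b - u a * v a - ∫ t in a..b, u' t * v t|
      ≤ |u b * v b| + |u a * v a| + |∫ t in a..b, u' t * v t| :=
        (abs_sub _ _).trans (add_le_add_left (abs_sub _ _) _)
    _ ≤ u b * M + u a * M + M * (u b - u a) := by gcongr
    _ = 2 * M * u b := by ring

lemma abs_integral_cos_mul_sin_le {x a : ℝ} (hx : 0 < x) (ha₀ : 0 ≤ a) (ha : a < Real.pi / 2) :
    |∫ θ in (0 : ℝ)..a, Real.cos (x * Real.sin θ)| ≤ 2 / (x * Real.cos a) := by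
  have hmem : ∀ θ ∈ uIcc 0 a, 0 ≤ θ ∧ θ ≤ a := fun θ hθ => by
    rwa [uIcc_of_le ha₀] at hθ
  have hcos : ∀ θ ∈ uIcc 0 a, 0 < Real.cos θ := fun θ hθ =>
    Real.cos_pos_of_mem_Ioo ⟨by linarith [hmem θ hθ, Real.pi_pos], by linarith [hmem θ hθ]⟩
  have hamplitude : ∀ θ ∈ uIcc 0 a, HasDerivAt (fun θ => (x * Real.cos θ)⁻¹)
      (x * Real.sin θ / (x * Real.cos θ) ^ 2) θ := fun θ hθ =>
    (((Real.hasDerivAt_cos θ).const_mul x).fun_inv (mul_pos hx (hcos θ hθ)).ne').congr_deriv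
      (by ring)
  have hphase : ∀ θ ∈ uIcc 0 a, HasDerivAt (fun θ => Real.sin (x * Real.sin θ))
      (Real.cos (x * Real.sin θ) * (x * Real.cos θ)) θ := fun θ _ =>
    ((Real.hasDerivAt_sin θ).const_mul x).sin
  have hbound := abs_integral_mul_deriv_le_of_deriv_nonneg (M := 1) ha₀ hamplitude hphase
    (ContinuousOn.intervalIntegrable <| ContinuousOn.div (by fun_prop) (by fun_prop)
      fun θ hθ => (pow_pos (mul_pos hx (hcos θ hθ)) 2).ne')
    (Continuous.intervalIntegrable (by fun_prop) _ _) (by simpa using hx.le)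
    (fun θ hθ => div_nonneg (mul_nonneg hx.le <| Real.sin_nonneg_of_nonneg_of_le_pi
      (hmem θ hθ).1 (by linarith [hmem θ hθ, Real.pi_pos])) (sq_nonneg _))
    (fun θ _ => Real.abs_sin_le_one _)
  rw [mul_one, ← div_eq_mul_inv] at hbound
  refine le_of_eq_of_le (congrArg _ <| intervalIntegral.integral_congr fun θ hθ => ?_) hbound
  field [(hcos θ hθ).ne']

end Oscillation

section BesselJ0

lemma intervalIntegrable_cos_mul_sin (x a b : ℝ) :
    IntervalIntegrable (fun θ : ℝ => Real.cos (x * Real.sin θ)) volume a b :=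
  Continuous.intervalIntegrable (by fun_prop) _ _

lemma continuous_besselJ0 : Continuous besselJ0 :=
  continuous_const.mul <|
    intervalIntegral.continuous_parametric_intervalIntegral_of_continuous' (by fun_prop) _ _

lemma besselJ0_eq_integral_pi_div_two (x : ℝ) :
    besselJ0 x = 2 / Real.pi * ∫ θ in (0 : ℝ)..(Real.pi / 2), Real.cos (x * Real.sin θ) := by
  have hreflect : ∫ θ in (Real.pi / 2)..Real.pi, Real.cos (x * Real.sin θ) =
      ∫ θ in (0 : ℝ)..(Real.pi / 2), Real.cos (x * Real.sin θ) := by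
    simpa [Real.sin_pi_sub, sub_half] using (intervalIntegral.integral_comp_sub_left
      (a := 0) (b := Real.pi / 2) (fun θ : ℝ => Real.cos (x * Real.sin θ)) Real.pi).symm
  rw [besselJ0, ← intervalIntegral.integral_add_adjacent_intervals (b := Real.pi / 2)
    (intervalIntegrable_cos_mul_sin x _ _)
    (intervalIntegrable_cos_mul_sin x _ _), hreflect]
  ring

lemma setIntegral_cos_mul_sin_Ioo_neg_pi_pi (x : ℝ) :
    ∫ θ in Ioo (-Real.pi) Real.pi, Real.cos (x * Real.sin θ) = 2 * Real.pi * besselJ0 x := by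
  have heven : ∫ θ in (-Real.pi)..0, Real.cos (x * Real.sin θ) =
      ∫ θ in (0 : ℝ)..Real.pi, Real.cos (x * Real.sin θ) := by
    simpa using (intervalIntegral.integral_comp_neg (a := 0) (b := Real.pi)
      (fun θ : ℝ => Real.cos (x * Real.sin θ))).symm
  rw [← integral_Ioc_eq_integral_Ioo,
    ← intervalIntegral.integral_of_le (by linarith [Real.pi_pos]),
    ← intervalIntegral.integral_add_adjacent_intervals (b := 0)
      (intervalIntegrable_cos_mul_sin x _ _)
      (intervalIntegrable_cos_mul_sin x _ _), heven, besselJ0]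
  field [Real.pi_ne_zero]

lemma abs_besselJ0_le {x : ℝ} (hx : 1 ≤ x) : |besselJ0 x| ≤ 4 / √x := by
  set y := √x
  have hy : 1 ≤ y := Real.one_le_sqrt.mpr hx
  have hxy : x = y * y := (Real.mul_self_sqrt (by linarith)).symm
  have hinv : y⁻¹ ≤ 1 := inv_le_one_of_one_le₀ hy
  have hinv₀ : 0 < y⁻¹ := by positivity
  have hpi := Real.pi_gt_three
  -- The phase is stationary at `π / 2`: cut off a neighbourhood of width `1 / √x`.
  have hfar : |∫ θ in (0 : ℝ)..(Real.pi / 2 - y⁻¹), Real.cos (x * Real.sin θ)| ≤ Real.pi / y := by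
    refine (abs_integral_cos_mul_sin_le (by linarith) (by linarith) (by linarith)).trans ?_
    rw [Real.cos_pi_div_two_sub]
    have hsin : 2 / Real.pi * y⁻¹ ≤ Real.sin y⁻¹ := Real.mul_le_sin hinv₀.le (by linarith)
    calc 2 / (x * Real.sin y⁻¹) ≤ 2 / (x * (2 / Real.pi * y⁻¹)) := by gcongr
      _ = Real.pi / y := by rw [hxy]; field_simp
  have hnear : |∫ θ in (Real.pi / 2 - y⁻¹)..(Real.pi / 2), Real.cos (x * Real.sin θ)| ≤ 1 / y := by
    simpa [abs_of_pos hinv₀] using intervalIntegral.norm_integral_le_of_norm_le_const (C := 1)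
      (a := Real.pi / 2 - y⁻¹) (b := Real.pi / 2)
      (f := fun θ : ℝ => Real.cos (x * Real.sin θ)) (fun θ _ => Real.abs_cos_le_one _)
  rw [besselJ0_eq_integral_pi_div_two, ← intervalIntegral.integral_add_adjacent_intervals
    (b := Real.pi / 2 - y⁻¹) (intervalIntegrable_cos_mul_sin x _ _)
    (intervalIntegrable_cos_mul_sin x _ _), abs_mul, abs_of_pos (by positivity)]
  calc 2 / Real.pi * |_ + _| ≤ 2 / Real.pi * (Real.pi / y + 1 / y) := by
        gcongr
        exact (abs_add_le _ _).trans (add_le_add hfar hnear)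
    _ = (2 + 2 / Real.pi) / y := by field_simp
    _ ≤ 4 / y := by
        gcongr
        linarith [(div_le_one₀ Real.pi_pos).mpr Real.two_le_pi]

lemma besselJ0_isBigO_atTop : besselJ0 =O[atTop] fun x => x ^ (-(1 / 2) : ℝ) := by
  refine IsBigO.of_bound 4 ?_
  filter_upwards [eventually_ge_atTop 1] with x hx
  rw [Real.rpow_neg (by linarith), ← Real.sqrt_eq_rpow, norm_inv,
    Real.norm_of_nonneg (Real.sqrt_nonneg x), ← div_eq_mul_inv]
  exact abs_besselJ0_le hx

lemma mul_besselJ0_div_pow_succ_isBigO_atTop (j : ℕ) {r : ℝ} (hr : 0 < r) (k : ℝ) :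
    (fun p => p * besselJ0 (p * r) / (p ^ 2 + k ^ 2) ^ (j + 1)) =O[atTop]
      fun p => p ^ (-(3 / 2) : ℝ) := by
  have hJ : (fun p => besselJ0 (p * r)) =O[atTop] fun p => p ^ (-(1 / 2) : ℝ) := by
    refine (besselJ0_isBigO_atTop.comp_tendsto (tendsto_id.atTop_mul_const hr)).trans ?_
    refine IsBigO.of_bound (r ^ (-(1 / 2) : ℝ)) ?_
    filter_upwards [eventually_ge_atTop 0] with p hp
    simp only [Function.comp_apply, id_eq]
    rw [Real.mul_rpow hp hr.le, norm_mul, Real.norm_of_nonneg (Real.rpow_nonneg hr.le _), mul_comm]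
  have hdenom : (fun p : ℝ => ((p ^ 2 + k ^ 2) ^ (j + 1))⁻¹) =O[atTop] fun p => (p ^ 2)⁻¹ := by
    refine IsBigO.of_bound 1 ?_
    filter_upwards [eventually_ge_atTop 1] with p hp
    have hp₂ : 1 ≤ p ^ 2 := one_le_pow₀ hp
    have hle : p ^ 2 ≤ p ^ 2 + k ^ 2 := le_add_of_nonneg_right (sq_nonneg k)
    rw [one_mul, norm_inv, norm_inv, Real.norm_of_nonneg (by positivity),
      Real.norm_of_nonneg (by positivity)]
    gcongr
    exact hle.trans (le_self_pow₀ (hp₂.trans hle) j.succ_ne_zero)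
  refine (((isBigO_refl (fun p : ℝ => p) atTop).mul hJ).mul hdenom).congr'
    (.of_forall fun p => (div_eq_mul_inv _ _).symm) ?_
  filter_upwards [eventually_gt_atTop 0] with p hp
  rw [← Real.rpow_natCast, ← Real.rpow_neg hp.le, mul_assoc, ← Real.rpow_add hp,
    ← Real.rpow_one_add' hp.le (by norm_num)]
  norm_num

lemma integrableOn_mul_besselJ0_div_pow_succ (j : ℕ) {r k : ℝ} (hr : 0 < r) (hk : k ≠ 0) :
    IntegrableOn (fun p => p * besselJ0 (p * r) / (p ^ 2 + k ^ 2) ^ (j + 1)) (Ioi 0) := by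
  have hcont : Continuous fun p => p * besselJ0 (p * r) / (p ^ 2 + k ^ 2) ^ (j + 1) := by
    have := continuous_besselJ0
    exact Continuous.div (by fun_prop) (by fun_prop) fun p => by positivity
  refine IntegrableOn.mono_set ?_ Ioi_subset_Ici_self
  exact (hcont.locallyIntegrable.locallyIntegrableOn _).integrableOn_of_isBigO_atTop
    (mul_besselJ0_div_pow_succ_isBigO_atTop j hr k)
    (integrableAtFilter_rpow_atTop_iff.mpr (by norm_num))

end BesselJ0

section Weber

lemma integral_exp_neg_mul_sq_mul_cos {s : ℝ} (hs : 0 < s) (r : ℝ) :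
    ∫ y : ℝ, Real.exp (-s * y ^ 2) * Real.cos (r * y) =
      √(Real.pi / s) * Real.exp (-(r ^ 2 / (4 * s))) := by
  have hint : Integrable fun y : ℝ => Complex.exp (-(s : ℂ) * y ^ 2 + r * Complex.I * y + 0) :=
    integrable_cexp_quadratic (by simpa using hs) _ _
  have hre (y : ℝ) : (Complex.exp (-(s : ℂ) * y ^ 2 + r * Complex.I * y + 0)).re =
      Real.exp (-s * y ^ 2) * Real.cos (r * y) := by
    simp [Complex.exp_re, ← Complex.ofReal_pow]
  have hfourier : ∫ y : ℝ, Complex.exp (-(s : ℂ) * y ^ 2 + r * Complex.I * y + 0) =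
      ((√(Real.pi / s) * Real.exp (-(r ^ 2 / (4 * s))) : ℝ) : ℂ) := by
    rw [integral_cexp_quadratic (by simpa using hs), Real.sqrt_eq_rpow, Complex.ofReal_mul,
      Complex.ofReal_cpow (by positivity)]
    push_cast
    congr 2
    · simp
    · rw [mul_pow, Complex.I_sq]
      ring
  simp only [← hre]
  rw [← Complex.ofReal_re (_ * _), ← hfourier]
  exact integral_re hint

lemma integral_gaussian_mul_cos_polarCoord {s : ℝ} (hs : 0 < s) (r : ℝ) :
    ∫ q in Ioi (0 : ℝ) ×ˢ Ioo (-Real.pi) Real.pi,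
      q.1 * Real.exp (-s * q.1 ^ 2) * Real.cos (q.1 * r * Real.sin q.2) =
      Real.pi / s * Real.exp (-(r ^ 2 / (4 * s))) := by
  set F : ℝ × ℝ → ℝ := fun q =>
    Real.exp (-s * q.1 ^ 2) * (Real.exp (-s * q.2 ^ 2) * Real.cos (r * q.2))
  have hpolar (q : ℝ × ℝ) : q.1 • F (polarCoord.symm q) =
      q.1 * Real.exp (-s * q.1 ^ 2) * Real.cos (q.1 * r * Real.sin q.2) := by
    simp only [F, polarCoord_symm_apply, smul_eq_mul]
    rw [← mul_assoc (Real.exp _), ← Real.exp_add, mul_assoc]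
    congr 3
    · linear_combination (-s * q.1 ^ 2) * Real.sin_sq_add_cos_sq q.2
    · ring
  calc _ = ∫ q in polarCoord.target, q.1 • F (polarCoord.symm q) := by
        simp only [hpolar, polarCoord_target]
    _ = ∫ q : ℝ × ℝ, F q := integral_comp_polarCoord_symm F
    _ = (∫ x : ℝ, Real.exp (-s * x ^ 2)) *
          ∫ y : ℝ, Real.exp (-s * y ^ 2) * Real.cos (r * y) :=
        integral_prod_mul (fun x : ℝ => Real.exp (-s * x ^ 2))
          fun y : ℝ => Real.exp (-s * y ^ 2) * Real.cos (r * y)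
    _ = _ := by
        rw [integral_gaussian, integral_exp_neg_mul_sq_mul_cos hs, ← mul_assoc,
          Real.mul_self_sqrt (by positivity)]

lemma integral_mul_besselJ0_mul_exp_neg_mul_sq {s : ℝ} (hs : 0 < s) (r : ℝ) :
    ∫ p in Ioi (0 : ℝ), p * besselJ0 (p * r) * Real.exp (-s * p ^ 2) =
      (2 * s)⁻¹ * Real.exp (-(r ^ 2 / (4 * s))) := by
  have hint : IntegrableOn (fun q : ℝ × ℝ =>
      q.1 * Real.exp (-s * q.1 ^ 2) * Real.cos (q.1 * r * Real.sin q.2))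
      (Ioi 0 ×ˢ Ioo (-Real.pi) Real.pi) (volume.prod volume) := by
    rw [IntegrableOn, ← Measure.prod_restrict]
    exact ((integrable_mul_exp_neg_mul_sq hs).integrableOn.comp_fst _).mul_bdd (c := 1)
      (Continuous.aestronglyMeasurable (by fun_prop))
      (.of_forall fun q => Real.abs_cos_le_one _)
  have hangular (p : ℝ) : ∫ θ in Ioo (-Real.pi) Real.pi,
      p * Real.exp (-s * p ^ 2) * Real.cos (p * r * Real.sin θ) =
      2 * Real.pi * (p * besselJ0 (p * r) * Real.exp (-s * p ^ 2)) := by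
    rw [integral_const_mul, setIntegral_cos_mul_sin_Ioo_neg_pi_pi]
    ring
  have hplane := integral_gaussian_mul_cos_polarCoord hs r
  rw [Measure.volume_eq_prod, setIntegral_prod _ hint] at hplane
  simp only [hangular] at hplane
  rw [integral_const_mul] at hplane
  refine mul_left_cancel₀ Real.two_pi_pos.ne' (hplane.trans ?_)
  field

end Weber

section Laplace

lemma integral_pow_mul_exp_neg_mul_Ioi (j : ℕ) {a : ℝ} (ha : 0 < a) :
    ∫ s in Ioi (0 : ℝ), s ^ j * Real.exp (-(a * s)) = j.factorial / a ^ (j + 1) := by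
  have h := Real.integral_rpow_mul_exp_neg_mul_Ioi (a := (j : ℝ) + 1) (by positivity) ha
  simp only [add_sub_cancel_right, Real.rpow_natCast, Real.Gamma_nat_eq_factorial] at h
  rw [h, ← Nat.cast_add_one, Real.rpow_natCast, one_div, inv_pow, div_eq_inv_mul]

lemma integrableOn_pow_mul_exp_neg_mul_Ioi (j : ℕ) {a : ℝ} (ha : 0 < a) :
    IntegrableOn (fun s : ℝ => s ^ j * Real.exp (-(a * s))) (Ioi 0) :=
  .of_integral_ne_zero <| by
    rw [integral_pow_mul_exp_neg_mul_Ioi j ha]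
    positivity

variable {α : Type*} [MeasurableSpace α] {μ : Measure α} {f a : α → ℝ} {j : ℕ}

lemma integrable_prod_mul_pow_mul_exp_neg_mul (ha : Measurable a) (hpos : ∀ x, 0 < a x)
    (hf : Integrable (fun x => f x / a x ^ (j + 1)) μ) :
    Integrable (fun q : α × ℝ => f q.1 * (q.2 ^ j * Real.exp (-(a q.1 * q.2))))
      (μ.prod (volume.restrict (Ioi 0))) := by
  have hfm : AEStronglyMeasurable f μ := by
    refine (hf.aestronglyMeasurable.mul (ha.pow_const (j + 1)).aestronglyMeasurable).congr
      (.of_forall fun x => ?_)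
    exact div_mul_cancel₀ _ (pow_pos (hpos x) _).ne'
  refine (integrable_prod_iff ?_).mpr ⟨.of_forall fun x =>
    (integrableOn_pow_mul_exp_neg_mul_Ioi j (hpos x)).const_mul (f x), ?_⟩
  · exact hfm.comp_fst.mul (Measurable.aestronglyMeasurable (by fun_prop))
  · refine (hf.norm.const_mul (j.factorial : ℝ)).congr (.of_forall fun x => ?_)
    have hnorm : ∫ s in Ioi (0 : ℝ), ‖s ^ j * Real.exp (-(a x * s))‖ =
        j.factorial / a x ^ (j + 1) := by
      rw [← integral_pow_mul_exp_neg_mul_Ioi j (hpos x)]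
      refine setIntegral_congr_fun measurableSet_Ioi fun s (hs : 0 < s) => ?_
      exact Real.norm_of_nonneg (by positivity)
    simp only [norm_mul (f x)]
    rw [integral_const_mul, hnorm, norm_div, Real.norm_of_nonneg (pow_pos (hpos x) _).le]
    ring

lemma factorial_mul_integral_div_pow_succ [SFinite μ] (ha : Measurable a) (hpos : ∀ x, 0 < a x)
    (hf : Integrable (fun x => f x / a x ^ (j + 1)) μ) :
    j.factorial * ∫ x, f x / a x ^ (j + 1) ∂μ =
      ∫ s in Ioi (0 : ℝ), s ^ j * ∫ x, f x * Real.exp (-(a x * s)) ∂μ := by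
  calc j.factorial * ∫ x, f x / a x ^ (j + 1) ∂μ
      = ∫ x, (∫ s in Ioi (0 : ℝ), f x * (s ^ j * Real.exp (-(a x * s)))) ∂μ := by
        rw [← integral_const_mul]
        congr with x
        rw [integral_const_mul, integral_pow_mul_exp_neg_mul_Ioi j (hpos x)]
        ring
    _ = ∫ s in Ioi (0 : ℝ), ∫ x, f x * (s ^ j * Real.exp (-(a x * s))) ∂μ :=
        integral_integral_swap (integrable_prod_mul_pow_mul_exp_neg_mul ha hpos hf)
    _ = ∫ s in Ioi (0 : ℝ), s ^ j * ∫ x, f x * Real.exp (-(a x * s)) ∂μ := by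
        simp only [← integral_const_mul, mul_left_comm]

end Laplace

section BesselK

lemma sq_div_four_le_cosh (t : ℝ) : t ^ 2 / 4 ≤ Real.cosh t := by
  rw [← Real.cosh_abs, ← sq_abs, Real.cosh_eq]
  have := Real.quadratic_le_exp_of_nonneg (abs_nonneg t)
  linarith [Real.exp_pos (-|t|), abs_nonneg t]

lemma integrable_exp_neg_mul_cosh_mul_exp {z : ℝ} (hz : 0 < z) (a : ℝ) :
    Integrable fun t : ℝ => Real.exp (-(z * Real.cosh t)) * Real.exp (a * t) := by
  have hgauss : Integrable fun t : ℝ =>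
      Real.exp (a ^ 2 / z) * Real.exp (-(z / 4) * (t - 2 * a / z) ^ 2) :=
    ((integrable_exp_neg_mul_sq (by positivity)).comp_sub_right (2 * a / z)).const_mul _
  refine hgauss.mono' (Continuous.aestronglyMeasurable (by fun_prop)) (.of_forall fun t => ?_)
  rw [Real.norm_of_nonneg (by positivity), ← Real.exp_add, ← Real.exp_add, Real.exp_le_exp]
  have hsquare : a ^ 2 / z + -(z / 4) * (t - 2 * a / z) ^ 2 = -(z * (t ^ 2 / 4)) + a * t := by
    field
  rw [hsquare]
  gcongr
  exact sq_div_four_le_cosh t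

lemma integral_exp_neg_mul_cosh_mul_exp (j : ℕ) {z : ℝ} (hz : 0 < z) :
    ∫ t : ℝ, Real.exp (-(z * Real.cosh t)) * Real.exp (j * t) = 2 * besselK j z := by
  set f : ℝ → ℝ := fun t => Real.exp (-(z * Real.cosh t)) * Real.exp (j * t) with hf
  have hint : Integrable f := integrable_exp_neg_mul_cosh_mul_exp hz j
  have hneg : ∫ t in Iic (0 : ℝ), f t = ∫ t in Ioi (0 : ℝ), f (-t) := by
    rw [integral_comp_neg_Ioi, neg_zero]
  rw [← intervalIntegral.integral_Iic_add_Ioi hint.integrableOn hint.integrableOn, hneg,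
    ← integral_add hint.comp_neg.integrableOn hint.integrableOn, besselK, ← integral_const_mul]
  congr with t
  simp only [hf, Real.cosh_neg, mul_neg, Real.cosh_eq (j * t)]
  ring

lemma integral_Ioi_inv_smul {E : Type*} [NormedAddCommGroup E] [NormedSpace ℝ E]
    {c : ℝ} (hc : 0 < c) (g : ℝ → E) :
    ∫ s in Ioi (0 : ℝ), s⁻¹ • g s = ∫ t : ℝ, g (c * Real.exp t) := by
  have hpos (t : ℝ) : 0 < c * Real.exp t := by positivity
  have himage : (fun t => c * Real.exp t) '' univ = Ioi 0 := by
    rw [image_univ, range_comp' (c * ·) Real.exp, Real.range_exp, image_mul_left_Ioi hc, mul_zero]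
  rw [← himage, integral_image_eq_integral_abs_deriv_smul MeasurableSet.univ
    (fun t _ => ((Real.hasDerivAt_exp t).const_mul c).hasDerivWithinAt)
    ((mul_right_injective₀ hc.ne').comp Real.exp_injective).injOn, setIntegral_univ]
  simp only [abs_of_pos (hpos _), smul_inv_smul₀ (hpos _).ne']

lemma integral_Ioi_inv_mul_pow_mul_exp (j : ℕ) {z c : ℝ} (hz : 0 < z) (hc : 0 < c) :
    ∫ s in Ioi (0 : ℝ), s⁻¹ * (s ^ j * Real.exp (-(z / 2 * (s / c + c / s)))) =
      2 * c ^ j * besselK j z := by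
  have hcosh (t : ℝ) : (c * Real.exp t) ^ j *
      Real.exp (-(z / 2 * (c * Real.exp t / c + c / (c * Real.exp t)))) =
      c ^ j * (Real.exp (-(z * Real.cosh t)) * Real.exp (j * t)) := by
    rw [mul_div_cancel_left₀ _ hc.ne', div_mul_cancel_left₀ hc.ne', ← Real.exp_neg, mul_pow,
      ← Real.exp_nat_mul, Real.cosh_eq]
    ring_nf
  simp only [← smul_eq_mul (_⁻¹ : ℝ)]
  rw [integral_Ioi_inv_smul hc]
  simp only [hcosh]
  rw [integral_const_mul, integral_exp_neg_mul_cosh_mul_exp j hz]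
  ring

end BesselK

lemma integral_mul_besselJ0_div_pow_succ (j : ℕ) {r k : ℝ} (hr : 0 < r) (hk : 0 < k) :
    ∫ p in Ioi (0 : ℝ), p * besselJ0 (p * r) / (p ^ 2 + k ^ 2) ^ (j + 1) =
      (r / (2 * k)) ^ j / j.factorial * besselK j (k * r) := by
  have hweber : ∀ s ∈ Ioi (0 : ℝ),
      s ^ j * ∫ p in Ioi (0 : ℝ), p * besselJ0 (p * r) * Real.exp (-((p ^ 2 + k ^ 2) * s)) =
        1 / 2 * (s⁻¹ * (s ^ j *
          Real.exp (-(k * r / 2 * (s / (r / (2 * k)) + r / (2 * k) / s))))) := by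
    intro s (hs : 0 < s)
    have hphase : -(k * r / 2 * (s / (r / (2 * k)) + r / (2 * k) / s)) =
        -(r ^ 2 / (4 * s)) + -(k ^ 2 * s) := by
      field
    have hsplit (p : ℝ) : p * besselJ0 (p * r) * Real.exp (-((p ^ 2 + k ^ 2) * s)) =
        p * besselJ0 (p * r) * Real.exp (-s * p ^ 2) * Real.exp (-(k ^ 2 * s)) := by
      rw [mul_assoc _ (Real.exp _), ← Real.exp_add]
      ring_nf
    simp only [hsplit]
    rw [integral_mul_const, integral_mul_besselJ0_mul_exp_neg_mul_sq hs, hphase, Real.exp_add]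
    ring
  have hlaplace := factorial_mul_integral_div_pow_succ (a := fun p : ℝ => p ^ 2 + k ^ 2)
    (by fun_prop) (fun p => by positivity) (integrableOn_mul_besselJ0_div_pow_succ j hr hk.ne')
  rw [setIntegral_congr_fun measurableSet_Ioi hweber, integral_const_mul,
    integral_Ioi_inv_mul_pow_mul_exp j (by positivity) (by positivity)] at hlaplace
  refine mul_left_cancel₀ (Nat.cast_ne_zero.mpr j.factorial_ne_zero) (hlaplace.trans ?_)
  field

/-- For every integer `j ≥ 0` and all reals `r > 0`, `k > 0`,
`(2k²)^j ∫_0^∞ p J₀(pr)/(p² + k²)^{j+1} dp = ((kr)^j / j!) K_j(kr)`.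
Consequently, for every integer `n ≥ 1`, the 2D inverse Fourier transform of
`ĝ_n` satisfies `h_n(r,k) = (1/(2π)) ∑_{j=0}^{n-1} ∫_0^∞ (2k²)^j/(p² + k²)^{j+1}
J₀(pr) p dp = (1/(2π)) ∑_{j=0}^{n-1} ((kr)^j / j!) K_j(kr)`. -/
theorem helmholtzH2_inverse_fourier (r k : ℝ) (hr : 0 < r) (hk : 0 < k) :
    (∀ j : ℕ,
        (2 * k ^ 2) ^ j *
            ∫ p in Set.Ioi (0 : ℝ), p * besselJ0 (p * r) / (p ^ 2 + k ^ 2) ^ (j + 1) =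
          ((k * r) ^ j / (Nat.factorial j : ℝ)) * besselK j (k * r)) ∧
      ∀ n : ℕ, 1 ≤ n →
        (1 / (2 * Real.pi)) * ∑ j ∈ Finset.range n,
            ∫ p in Set.Ioi (0 : ℝ),
              (2 * k ^ 2) ^ j / (p ^ 2 + k ^ 2) ^ (j + 1) * besselJ0 (p * r) * p =
          (1 / (2 * Real.pi)) * ∑ j ∈ Finset.range n,
            ((k * r) ^ j / (Nat.factorial j : ℝ)) * besselK j (k * r) := by
  have hterm (j : ℕ) : (2 * k ^ 2) ^ j *
        ∫ p in Ioi (0 : ℝ), p * besselJ0 (p * r) / (p ^ 2 + k ^ 2) ^ (j + 1) =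
      (k * r) ^ j / j.factorial * besselK j (k * r) := by
    have hscale : (k * r) ^ j = (2 * k ^ 2) ^ j * (r / (2 * k)) ^ j := by
      rw [← mul_pow]
      field_simp
    rw [integral_mul_besselJ0_div_pow_succ j hr hk, hscale]
    ring
  refine ⟨hterm, fun n _ => congrArg _ (Finset.sum_congr rfl fun j _ => ?_)⟩
  rw [← hterm j, ← integral_const_mul]
  congr with p
  ring
end

section
/- For every integer n ≥ 1 and all reals r > 0, k > 0, ∫_{−∞}^{∞} e^{−r² e^t/4} · (1/(4π)) e^{−k² e^{−t}} (Σ_{j=0}^{n−1} (2k² e^{−t})^j / j!) dt = (1/(2π)) Σ_{j=0}^{n−1} ((kr)^j / j!) K_j(kr); i.e., the 2D non-oscillatory component h_n(r,k) admits the integral representation h_n(r,k) = ∫_{−∞}^{∞} e^{−r² e^t/4} ω_n(k,t) dt with ω_n(k,t) = (1/(4π)) e^{−k² e^{−t}} Σ_{j=0}^{n−1} (2k² e^{−t})^j / j!. -/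
/-- The weight `ω_n(k,t) = (1/(4π)) e^{-k² e^{-t}} ∑_{j=0}^{n-1} (2k² e^{-t})^j / j!`. -/
noncomputable def helmholtzW2 (n : ℕ) (k t : ℝ) : ℝ :=
  (1 / (4 * Real.pi)) * Real.exp (-(k ^ 2 * Real.exp (-t))) *
    ∑ j ∈ Finset.range n, (2 * k ^ 2 * Real.exp (-t)) ^ j / (Nat.factorial j : ℝ)

/-!
Writing `α = r / 2` and `β = k`, the exponent `α² eᵗ + β² e⁻ᵗ` is symmetric about its minimum
`t = log (β / α)`: translating by it turns the exponent into `2αβ cosh t = kr cosh t` and multiplies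
`e^{-jt}` by `(α / β)^j`. Folding the line at `0` replaces `e^{-jt}` by `2 cosh (jt)`, so that each
term of the weight contributes one `K_j(kr)`, with coefficient `(2k²)^j (α / β)^j = (kr)^j`
up to the factor `1 / (2π j!)`.
-/

open MeasureTheory Real Set

theorem one_add_sq_div_two_le_cosh (x : ℝ) : 1 + x ^ 2 / 2 ≤ cosh x := by
  have half_le_sinh : |x / 2| ≤ |sinh (x / 2)| := by
    rw [abs_sinh]
    exact self_le_sinh_iff.2 (abs_nonneg _)
  have cosh_eq_half : cosh x = 1 + 2 * sinh (x / 2) ^ 2 := by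
    rw [← mul_div_cancel₀ x two_ne_zero, mul_div_assoc, cosh_two_mul, cosh_sq]
    ring_nf
  linarith [sq_le_sq.2 half_le_sinh]

theorem integrable_exp_quadratic {b : ℝ} (hb : 0 < b) (c d : ℝ) :
    Integrable fun t : ℝ => exp (-b * t ^ 2 + c * t + d) := by
  have hcexp := (integrable_cexp_quadratic (b := b) (by simpa using hb) c d).norm
  simpa [Complex.norm_exp, ← Complex.ofReal_pow] using hcexp

theorem integral_eq_integral_Ioi_add_comp_neg {E : Type*} [NormedAddCommGroup E] [NormedSpace ℝ E]
    {f : ℝ → E} (hf : Integrable f) : ∫ t, f t = ∫ t in Ioi 0, (f t + f (-t)) := by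
  rw [integral_add hf.integrableOn hf.comp_neg.integrableOn, integral_comp_neg_Ioi, neg_zero,
    add_comm, intervalIntegral.integral_Iic_add_Ioi hf.integrableOn hf.integrableOn]

theorem integrable_exp_neg_mul_cosh_mul_exp_s13 {x : ℝ} (hx : 0 < x) (ν : ℝ) :
    Integrable fun t : ℝ => exp (-(x * cosh t)) * exp (ν * t) := by
  have hGaussian := integrable_exp_quadratic (half_pos hx) ν (-x)
  refine hGaussian.mono' (by fun_prop) (.of_forall fun t => ?_)
  rw [← exp_add, norm_eq_abs, abs_exp, exp_le_exp]
  linarith [mul_le_mul_of_nonneg_left (one_add_sq_div_two_le_cosh t) hx.le]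

theorem integral_exp_neg_mul_cosh_mul_exp_s13 {x : ℝ} (hx : 0 < x) (ν : ℝ) :
    ∫ t : ℝ, exp (-(x * cosh t)) * exp (ν * t) =
      2 * ∫ t in Ioi (0 : ℝ), exp (-(x * cosh t)) * cosh (ν * t) := by
  rw [integral_eq_integral_Ioi_add_comp_neg (integrable_exp_neg_mul_cosh_mul_exp_s13 hx ν),
    ← integral_const_mul]
  congr 1 with t
  rw [cosh_neg, mul_neg, cosh_eq (ν * t)]
  ring

theorem integral_exp_neg_mul_cosh_mul_exp_eq_besselK {x : ℝ} (hx : 0 < x) (j : ℕ) :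
    ∫ t : ℝ, exp (-(x * cosh t)) * exp (-(j : ℝ) * t) = 2 * besselK j x := by
  rw [integral_exp_neg_mul_cosh_mul_exp_s13 hx]
  simp only [besselK, neg_mul, cosh_neg]

theorem exp_mul_add_log {c : ℝ} (hc : 0 < c) (ν t : ℝ) :
    exp (ν * (t + log c)) = c ^ ν * exp (ν * t) := by
  rw [rpow_def_of_pos hc, ← exp_add]
  ring_nf

section TwoSidedExponential

variable {α β : ℝ}

theorem sq_mul_exp_add_sq_mul_exp_neg_add_log (hα : 0 < α) (hβ : 0 < β) (t : ℝ) :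
    α ^ 2 * exp (t + log (β / α)) + β ^ 2 * exp (-(t + log (β / α))) = 2 * α * β * cosh t := by
  rw [neg_add, exp_add, exp_add, exp_neg (log _), exp_log (div_pos hβ hα), cosh_eq]
  field_simp

theorem integrable_exp_neg_sq_mul_exp_add_mul_exp (hα : 0 < α) (hβ : 0 < β) (ν : ℝ) :
    Integrable fun t : ℝ => exp (-(α ^ 2 * exp t + β ^ 2 * exp (-t))) * exp (ν * t) := by
  have hx : 0 < 2 * α * β := by positivity
  have translated := (integrable_exp_neg_mul_cosh_mul_exp_s13 hx ν).const_mul ((β / α) ^ ν)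
  simp only [mul_left_comm ((β / α) ^ ν), ← exp_mul_add_log (div_pos hβ hα),
    ← sq_mul_exp_add_sq_mul_exp_neg_add_log hα hβ] at translated
  simpa only [neg_add_cancel_right] using translated.comp_add_right (-log (β / α))

theorem integral_exp_neg_sq_mul_exp_add_mul_exp (hα : 0 < α) (hβ : 0 < β) (ν : ℝ) :
    ∫ t : ℝ, exp (-(α ^ 2 * exp t + β ^ 2 * exp (-t))) * exp (ν * t) =
      (β / α) ^ ν * ∫ t : ℝ, exp (-(2 * α * β * cosh t)) * exp (ν * t) := by
  rw [← integral_add_right_eq_self _ (log (β / α)), ← integral_const_mul]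
  simp only [sq_mul_exp_add_sq_mul_exp_neg_add_log hα hβ, exp_mul_add_log (div_pos hβ hα),
    mul_left_comm]

theorem integral_exp_neg_sq_mul_exp_add_mul_exp_eq_besselK (hα : 0 < α) (hβ : 0 < β) (j : ℕ) :
    ∫ t : ℝ, exp (-(α ^ 2 * exp t + β ^ 2 * exp (-t))) * exp (-(j : ℝ) * t) =
      2 * (α / β) ^ j * besselK j (2 * α * β) := by
  rw [integral_exp_neg_sq_mul_exp_add_mul_exp hα hβ,
    integral_exp_neg_mul_cosh_mul_exp_eq_besselK (by positivity),
    rpow_neg (by positivity), rpow_natCast, ← inv_pow, inv_div]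
  ring

end TwoSidedExponential

theorem exp_neg_mul_helmholtzW2 (n : ℕ) (r k t : ℝ) :
    exp (-(r ^ 2 * exp t / 4)) * helmholtzW2 n k t =
      ∑ j ∈ Finset.range n, (1 / (4 * π) * ((2 * k ^ 2) ^ j / j.factorial)) *
        (exp (-((r / 2) ^ 2 * exp t + k ^ 2 * exp (-t))) * exp (-(j : ℝ) * t)) := by
  rw [helmholtzW2, Finset.mul_sum, Finset.mul_sum]
  refine Finset.sum_congr rfl fun j _ => ?_
  rw [neg_mul_comm, exp_nat_mul, neg_add, exp_add, mul_pow _ (exp (-t))]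
  ring_nf

/-- For every integer `n ≥ 1` and all reals `r > 0`, `k > 0`,
the 2D non-oscillatory component `h_n(r,k) = (1/(2π)) ∑_{j=0}^{n-1} ((kr)^j/j!) K_j(kr)`
admits the Gaussian integral representation
`h_n(r,k) = ∫_{-∞}^{∞} e^{-r² e^t/4} ω_n(k,t) dt`. -/
theorem helmholtzH2_gaussian_representation (n : ℕ) (hn : 1 ≤ n) (r k : ℝ)
    (hr : 0 < r) (hk : 0 < k) :
    ∫ t : ℝ, Real.exp (-(r ^ 2 * Real.exp t / 4)) * helmholtzW2 n k t =
      (1 / (2 * Real.pi)) * ∑ j ∈ Finset.range n,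
        ((k * r) ^ j / (Nat.factorial j : ℝ)) * besselK j (k * r) := by
  have weighted_integrable (j : ℕ) :=
    integrable_exp_neg_sq_mul_exp_add_mul_exp (half_pos hr) hk (-(j : ℝ))
  simp only [exp_neg_mul_helmholtzW2]
  rw [integral_finsetSum _ fun j _ => (weighted_integrable j).const_mul _, Finset.mul_sum]
  refine Finset.sum_congr rfl fun j _ => ?_
  have scale : (2 * k ^ 2) ^ j * (r / 2 / k) ^ j = (k * r) ^ j := by
    rw [← mul_pow]
    field_simp
  rw [integral_const_mul, integral_exp_neg_sq_mul_exp_add_mul_exp_eq_besselK (half_pos hr) hk,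
    show 2 * (r / 2) * k = k * r by ring, ← scale]
  ring
end
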